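/- arXiv:2308.04191 — 7 statements merged into one kernel-verified Lean document; each statement's English description precedes it below -/
import Mathlib

section
/- Let n be a natural number and let F ∈ ℂ[x₁,…,xₙ] be a degenerate polynomial. Then there exists a constant C > 0 depending only on F such that for every real K ≥ 1 and every finite non-empty set A ⊆ ℂ∖{0} satisfying |A·A| ≤ K|A|, one has |F(A,…,A)| ≤ C · K^C · |A|^{n−1}. -/
open MvPolynomial Pointwise

open scoped Classical

/-- The set of exponent vectors of monomials of `F`, viewed inside `ℚⁿ`. -/
noncomputable def expVecs {n : ℕ} (F : MvPolynomial (Fin n) ℂ) : Set (Fin n → ℚ) :=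
  (fun (m : Fin n →₀ ℕ) (i : Fin n) => (m i : ℚ)) '' (F.support : Set (Fin n →₀ ℕ))

/-- `d(F)`: the dimension of the `ℚ`-linear span of the exponent vectors of `F`. -/
noncomputable def dF {n : ℕ} (F : MvPolynomial (Fin n) ℂ) : ℕ :=
  Module.finrank ℚ (Submodule.span ℚ (expVecs F))

/-- `F(A, …, A)`, the image of the grid `Aⁿ` under `F`. -/
noncomputable def polyImage {n : ℕ} (F : MvPolynomial (Fin n) ℂ) (A : Finset ℂ) : Finset ℂ :=
  (Fintype.piFinset fun _ : Fin n => A).image fun a => eval a F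

theorem exists_vec {n : ℕ} (hn : 0 < n) (F : MvPolynomial (Fin n) ℂ) (hdeg : dF F ≤ n - 1) :
    ∃ v : Fin n → ℤ, (∃ j, v j ≠ 0) ∧ ∀ m ∈ F.support, ∑ i, v i * (m i : ℤ) = 0 := by
  have hlt : Submodule.span ℚ (expVecs F) < ⊤ := by
    rw [lt_top_iff_ne_top]
    intro h
    have h2 : dF F = n := by
      unfold dF
      rw [h, finrank_top]; simp
    omega
  obtain ⟨f, hf, hle⟩ := Submodule.exists_le_ker_of_lt_top _ hlt
  obtain ⟨b, hb⟩ := IsLocalization.exist_integer_multiples_of_finite (nonZeroDivisors ℤ)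
    (fun i : Fin n => f (Pi.single i 1))
  have hb0 : ((b : ℤ) : ℚ) ≠ 0 := by
    have := nonZeroDivisors.coe_ne_zero b
    exact_mod_cast this
  choose v hv using hb
  have hv' : ∀ i, (v i : ℚ) = (b : ℤ) * f (Pi.single i 1) := by
    intro i
    have := hv i
    simpa using this
  have hfx : ∀ x : Fin n → ℚ, f x = ∑ i, x i * f (Pi.single i 1) := by
    intro x
    conv_lhs => rw [pi_eq_sum_univ' x]
    rw [map_sum]
    refine Finset.sum_congr rfl fun i _ => ?_
    rw [map_smul, smul_eq_mul]
  refine ⟨v, ?_, ?_⟩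
  · by_contra! h
    apply hf
    ext x
    have : ∀ i, f (Pi.single i 1) = 0 := by
      intro i
      have h1 := hv' i
      rw [h i] at h1
      simpa [hb0] using h1
    simp [this]
  · intro m hm
    have h1 : f (fun i => (m i : ℚ)) = 0 := by
      apply hle
      apply Submodule.subset_span
      exact ⟨m, hm, rfl⟩
    rw [hfx] at h1
    have : ((∑ i, v i * (m i : ℤ) : ℤ) : ℚ) = 0 := by
      push_cast
      have h2 : ∑ i, (v i : ℚ) * (m i : ℚ) = (b : ℤ) * ∑ i, (m i : ℚ) * f (Pi.single i 1) := by
        rw [Finset.mul_sum]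
        refine Finset.sum_congr rfl fun i _ => ?_
        rw [hv']; ring
      rw [h2, h1, mul_zero]
    exact_mod_cast this

theorem eval_inv {n : ℕ} (F : MvPolynomial (Fin n) ℂ) (v : Fin n → ℤ)
    (hv : ∀ m ∈ F.support, ∑ i, v i * (m i : ℤ) = 0) (a : Fin n → ℂˣ) (t : ℂˣ) :
    eval (fun i => ((a i * t ^ v i : ℂˣ) : ℂ)) F = eval (fun i => (a i : ℂ)) F := by
  rw [eval_eq', eval_eq']
  refine Finset.sum_congr rfl fun m hm => ?_
  congr 1
  have : ∏ i, (a i * t ^ v i) ^ m i = ∏ i, (a i) ^ m i := by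
    simp_rw [mul_pow]
    rw [Finset.prod_mul_distrib]
    have h : ∏ i, (t ^ v i) ^ m i = t ^ (∑ i, v i * (m i : ℤ)) := by
      have hs : ∀ s : Finset (Fin n),
          ∏ i ∈ s, (t ^ v i) ^ m i = t ^ (∑ i ∈ s, v i * (m i : ℤ)) := by
        intro s
        induction s using Finset.induction_on with
        | empty => simp
        | insert a s ha ih =>
          rw [Finset.prod_insert ha, Finset.sum_insert ha, ih, zpow_add, zpow_mul, zpow_natCast]
      exact hs _
    rw [h, hv m hm]; simp
  have := congrArg (Units.val) this
  simpa using this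

theorem fiber_card (S : Finset ℂˣ) (k : ℤ) (hk : k ≠ 0) (w : ℂˣ) :
    (S.filter fun t => t ^ k = w).card ≤ k.natAbs := by
  obtain ⟨u, hu⟩ : ∃ u : ℂˣ, ∀ t : ℂˣ, t ^ k = w → t ^ k.natAbs = u := by
    rcases Int.natAbs_eq k with h | h
    · refine ⟨w, fun t ht => ?_⟩
      rw [h, zpow_natCast] at ht; exact ht
    · refine ⟨w⁻¹, fun t ht => ?_⟩
      rw [h, zpow_neg, zpow_natCast] at ht
      rw [← ht, inv_inv]
  have hpos : 0 < k.natAbs := Int.natAbs_pos.mpr hk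
  calc (S.filter fun t => t ^ k = w).card
      ≤ (Polynomial.nthRoots k.natAbs (u : ℂ)).toFinset.card := by
        refine Finset.card_le_card_of_injOn (fun t => (t : ℂ)) ?_ ?_
        · intro t ht
          simp only [Finset.coe_filter, Set.mem_ofPred_eq] at ht
          simp only [Finset.mem_coe, Multiset.mem_toFinset]
          rw [Polynomial.mem_nthRoots hpos]
          have := congrArg Units.val (hu t ht.2)
          simpa using this
        · intro x _ y _ h
          exact Units.ext h
    _ ≤ _ := Multiset.toFinset_card_le _
    _ ≤ _ := Polynomial.card_nthRoots _ _

noncomputable def twist (S : Finset ℂˣ) (k : ℤ) : Finset ℂˣ :=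
  (S ×ˢ S).image fun p => p.1 * p.2 ^ k

theorem twist_card (S : Finset ℂˣ) (hS : S.Nonempty) (k : ℤ) (K : ℝ)
    (h : ((S * S).card : ℝ) ≤ K * S.card) :
    ((twist S k).card : ℝ) ≤ K ^ (k.natAbs + 1) * S.card := by
  have hc : (0 : ℝ) < S.card := by exact_mod_cast hS.card_pos
  have key : ∀ m l : ℕ, m + l = k.natAbs + 1 → twist S k ⊆ S ^ m / S ^ l →
      ((twist S k).card : ℝ) ≤ K ^ (k.natAbs + 1) * S.card := by
    intro m l hml hsub
    have h1 := Finset.pluennecke_ruzsa_inequality_pow_div_pow_mul hS S m l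
    have h2 : (((S ^ m / S ^ l).card : ℝ)) ≤ ((S * S).card / S.card : ℝ) ^ (m + l) * S.card := by
      have h1' := (NNRat.cast_le (K := ℝ)).mpr h1
      push_cast at h1'
      exact h1'
    have h3 : ((twist S k).card : ℝ) ≤ (S ^ m / S ^ l).card := by
      exact_mod_cast Finset.card_le_card hsub
    refine h3.trans (h2.trans ?_)
    rw [hml]
    gcongr
    rwa [div_le_iff₀ hc]
  rcases Int.natAbs_eq k with hk | hk
  · refine key (k.natAbs + 1) 0 rfl ?_
    intro x hx
    simp only [twist, Finset.mem_image, Finset.mem_product] at hx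
    obtain ⟨⟨a, t⟩, ⟨ha, ht⟩, rfl⟩ := hx
    rw [pow_zero, div_one, pow_succ']
    refine Finset.mul_mem_mul ha ?_
    show t ^ k ∈ _
    have : t ^ k = t ^ k.natAbs := by rw [← zpow_natCast, ← hk]
    rw [this]
    exact Finset.pow_mem_pow ht
  · refine key 1 k.natAbs (by omega) ?_
    intro x hx
    simp only [twist, Finset.mem_image, Finset.mem_product] at hx
    obtain ⟨⟨a, t⟩, ⟨ha, ht⟩, rfl⟩ := hx
    have : t ^ k = (t ^ k.natAbs)⁻¹ := by rw [← zpow_natCast, ← zpow_neg, ← hk]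
    show a * t ^ k ∈ _
    rw [pow_one, this, ← div_eq_mul_inv]
    exact Finset.div_mem_div ha (Finset.pow_mem_pow ht)

theorem count {n : ℕ} (F : MvPolynomial (Fin n) ℂ) (v : Fin n → ℤ)
    (hv : ∀ m ∈ F.support, ∑ i, v i * (m i : ℤ) = 0) (j : Fin n) (hj : v j ≠ 0)
    (S : Finset ℂˣ) (P : Finset ℂ)
    (hP : ∀ c ∈ P, ∃ a : Fin n → ℂˣ, (∀ i, a i ∈ S) ∧ eval (fun i => (a i : ℂ)) F = c) :
    P.card * S.card ≤ (v j).natAbs * ∏ i, (twist S (v i)).card := by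
  have hP' : ∀ c, ∃ a : Fin n → ℂˣ, c ∈ P →
      (∀ i, a i ∈ S) ∧ eval (fun i => (a i : ℂ)) F = c := by
    intro c
    by_cases hc : c ∈ P
    · obtain ⟨a, ha⟩ := hP c hc
      exact ⟨a, fun _ => ha⟩
    · exact ⟨1, fun h => absurd h hc⟩
  choose r hr using hP'
  rw [← Finset.card_product, ← Fintype.card_piFinset]
  refine Finset.card_le_mul_card_image_of_maps_to
    (f := fun p : ℂ × ℂˣ => fun i => r p.1 i * p.2 ^ v i) ?_ _ ?_
  · rintro ⟨c, t⟩ hp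
    rw [Finset.mem_product] at hp
    rw [Fintype.mem_piFinset]
    intro i
    exact Finset.mem_image.mpr ⟨(r c i, t), Finset.mem_product.mpr ⟨(hr c hp.1).1 i, hp.2⟩, rfl⟩
  · intro b _
    set c := eval (fun i => (b i : ℂ)) F with hc
    refine le_trans ?_ (fiber_card S (v j) hj (b j / r c j))
    have hfst : ∀ p ∈ (P ×ˢ S).filter
        (fun p : ℂ × ℂˣ => (fun i => r p.1 i * p.2 ^ v i) = b), p.1 = c := by
      rintro ⟨c', t⟩ hp
      rw [Finset.mem_filter, Finset.mem_product] at hp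
      obtain ⟨⟨h1, h2⟩, h3⟩ := hp
      rw [hc, ← h3]
      simp only
      rw [eval_inv F v hv, (hr c' h1).2]
    refine Finset.card_le_card_of_injOn (fun p => p.2) ?_ ?_
    · rintro ⟨c', t⟩ hp
      have hc' := hfst _ hp
      simp only at hc'
      have hp := Finset.mem_filter.mp hp
      rw [Finset.mem_product] at hp
      refine Finset.mem_filter.mpr ⟨hp.1.2, ?_⟩
      have := congrFun hp.2 j
      simp only [hc'] at this
      rw [← this]; simp
    · intro p hp q hq h
      exact Prod.ext ((hfst p hp).trans (hfst q hq).symm) h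

theorem stmt1 (n : ℕ) (F : MvPolynomial (Fin n) ℂ) (hdeg : dF F ≤ n - 1) :
    ∃ C : ℝ, 0 < C ∧
      ∀ K : ℝ, 1 ≤ K → ∀ A : Finset ℂ, A.Nonempty → (0 : ℂ) ∉ A →
        ((A * A).card : ℝ) ≤ K * (A.card : ℝ) →
        ((polyImage F A).card : ℝ) ≤ C * K ^ C * (A.card : ℝ) ^ (n - 1) := by
  rcases Nat.eq_zero_or_pos n with rfl | hn
  · refine ⟨1, one_pos, fun K hK A _ _ _ => ?_⟩
    have h : (polyImage F A).card ≤ 1 := by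
      refine Finset.card_image_le.trans ?_
      simp
    have : ((polyImage F A).card : ℝ) ≤ 1 := by exact_mod_cast h
    simp
    linarith
  obtain ⟨v, ⟨j, hj⟩, hv⟩ := exists_vec hn F hdeg
  set D : ℕ := (v j).natAbs + ∑ i, ((v i).natAbs + 1) with hD
  have hjp : 0 < (v j).natAbs := Int.natAbs_pos.mpr hj
  refine ⟨(D : ℝ), by exact_mod_cast (by omega), fun K hK A hA h0 hAA => ?_⟩
  rw [Real.rpow_natCast]
  let S : Finset ℂˣ := A.preimage Units.val (Units.val_injective.injOn)
  have hSA : S.image Units.val = A := by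
    rw [Finset.image_preimage]
    apply Finset.filter_true_of_mem
    intro x hx
    have hx0 : x ≠ 0 := fun h => h0 (h ▸ hx)
    exact ⟨Units.mk0 x hx0, rfl⟩
  have hcard : S.card = A.card := by
    rw [← hSA, Finset.card_image_of_injective _ Units.val_injective]
  have hcard2 : (S * S).card = (A * A).card := by
    rw [← hSA, ← Finset.card_image_of_injective (S * S) Units.val_injective]
    congr 1
    exact Finset.image_mul (Units.coeHom ℂ)
  have hSne : S.Nonempty := by
    rw [← Finset.card_pos, hcard]; exact hA.card_pos
  have hcnt := count F v hv j hj S (polyImage F A) (by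
    intro c hc
    obtain ⟨a, ha, rfl⟩ := Finset.mem_image.mp hc
    rw [Fintype.mem_piFinset] at ha
    have hx0 : ∀ i, a i ≠ 0 := fun i h => h0 (h ▸ ha i)
    refine ⟨fun i => Units.mk0 (a i) (hx0 i), fun i => ?_, rfl⟩
    exact Finset.mem_preimage.mpr (ha i))
  have hApos : (0 : ℝ) < A.card := by exact_mod_cast hA.card_pos
  have hprod : ∏ i, ((twist S (v i)).card : ℝ) ≤
      K ^ (∑ i, ((v i).natAbs + 1)) * (A.card : ℝ) ^ n := by
    calc ∏ i, ((twist S (v i)).card : ℝ)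
        ≤ ∏ i, (K ^ ((v i).natAbs + 1) * (A.card : ℝ)) := by
          refine Finset.prod_le_prod (fun i _ => by positivity) fun i _ => ?_
          rw [← hcard]
          exact twist_card S hSne (v i) K (by rw [hcard2, hcard]; exact hAA)
      _ = _ := by
          rw [Finset.prod_mul_distrib, Finset.prod_pow_eq_pow_sum]; simp
  have hcnt' : ((polyImage F A).card : ℝ) * A.card ≤
      (v j).natAbs * ∏ i, ((twist S (v i)).card : ℝ) := by
    rw [hcard] at hcnt
    exact_mod_cast hcnt
  have hfin : ((polyImage F A).card : ℝ) * A.card ≤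
      ((D : ℝ) * K ^ D * (A.card : ℝ) ^ (n - 1)) * A.card := by
    have e : (A.card : ℝ) ^ (n - 1) * A.card = (A.card : ℝ) ^ n := by
      rw [← pow_succ]; congr 1; omega
    rw [mul_assoc _ _ (A.card : ℝ), e]
    calc _ ≤ _ := hcnt'
      _ ≤ ((v j).natAbs : ℝ) * (K ^ (∑ i, ((v i).natAbs + 1)) * (A.card : ℝ) ^ n) := by gcongr
      _ ≤ (D : ℝ) * (K ^ D * (A.card : ℝ) ^ n) := by
          have h1 : (v j).natAbs ≤ D := by omega
          have h2 : ∑ i, ((v i).natAbs + 1) ≤ D := by omega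
          gcongr
      _ = _ := by ring
  exact le_of_mul_le_mul_right hfin hApos
end

section
/- Let n, κ be natural numbers, let z₁,…,zₙ ∈ ℤⁿ be vectors which form a basis of ℚⁿ and whose entries all have absolute value at most κ, and let t = (t₁,…,tₙ) ∈ (ℂ∖{0})ⁿ. Then there is a constant C depending only on κ and n such that for every finite set A ⊆ ℂ∖{0}, the number of tuples (a₁,…,aₙ) ∈ Aⁿ satisfying a₁^{z_{i,1}} ⋯ aₙ^{z_{i,n}} = t_i for every 1 ≤ i ≤ n is at most C. -/
open scoped Classical

theorem stmt6 (n κ : ℕ) :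
    ∃ C : ℕ, ∀ z : Fin n → Fin n → ℤ,
      LinearIndependent ℚ (fun i j => (z i j : ℚ)) →
      (∀ i j, |z i j| ≤ (κ : ℤ)) →
      ∀ t : Fin n → ℂ, (∀ i, t i ≠ 0) →
        ∀ A : Finset ℂ, (0 : ℂ) ∉ A →
          ((Fintype.piFinset fun _ : Fin n => A).filter
              fun a => ∀ i, ∏ j, a j ^ z i j = t i).card ≤ C := by
  refine ⟨(n.factorial * κ ^ n) ^ n, ?_⟩
  intro z hz hk t ht A hA
  let M : Matrix (Fin n) (Fin n) ℤ := Matrix.of z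
  have hd : M.det ≠ 0 := by
    have h1 : IsUnit (M.map (Int.castRingHom ℚ)) := by
      rw [← Matrix.linearIndependent_rows_iff_isUnit]
      exact hz
    have h2 := (Matrix.isUnit_iff_isUnit_det _).1 h1
    intro h0
    have h3 := RingHom.map_det (Int.castRingHom ℚ) M
    rw [h0] at h3
    simp only [RingHom.mapMatrix_apply] at h3
    rw [← h3] at h2
    simp at h2
  have hb : M.det.natAbs ≤ n.factorial * κ ^ n := by
    have := Matrix.det_le (A := M) (abv := AbsoluteValue.abs) (x := (κ : ℤ)) (fun i j => hk i j)
    simp only [Fintype.card_fin, AbsoluteValue.abs_apply, nsmul_eq_mul] at this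
    rw [Int.abs_eq_natAbs] at this
    exact_mod_cast this
  let s : Fin n → ℂ := fun k => ∏ i, t i ^ (M.det.sign * M.adjugate k i)
  have hsub : ((Fintype.piFinset fun _ : Fin n => A).filter
              fun a => ∀ i, ∏ j, a j ^ z i j = t i) ⊆
      Fintype.piFinset fun k => (Polynomial.nthRoots M.det.natAbs (s k)).toFinset := by
    intro a ha
    rw [Finset.mem_filter, Fintype.mem_piFinset] at ha
    obtain ⟨ha, he⟩ := ha
    have ha0 : ∀ j, a j ≠ 0 := fun j h => hA (h ▸ ha j)
    rw [Fintype.mem_piFinset]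
    intro k
    rw [Multiset.mem_toFinset, Polynomial.mem_nthRoots (Int.natAbs_pos.2 hd)]
    have hadj : ∀ j, ∑ i, z i j * (M.det.sign * M.adjugate k i)
        = if k = j then (M.det.natAbs : ℤ) else 0 := by
      intro j
      have h := congrFun (congrFun (Matrix.adjugate_mul M) k) j
      rw [Matrix.mul_apply] at h
      calc _ = M.det.sign * ∑ i, M.adjugate k i * M i j := by
            rw [Finset.mul_sum]
            refine Finset.sum_congr rfl fun i _ => ?_
            change z i j * _ = _ * (_ * z i j)
            ring
        _ = _ := by
            rw [h, Matrix.smul_apply, Matrix.one_apply]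
            split_ifs
            · rw [smul_eq_mul, mul_one, Int.sign_mul_self_eq_abs, Int.abs_eq_natAbs]
            · simp
    have zs : ∀ (x : ℂ), x ≠ 0 → ∀ (f : Fin n → ℤ) (S : Finset (Fin n)),
        ∏ i ∈ S, x ^ f i = x ^ ∑ i ∈ S, f i := by
      intro x hx f S
      induction S using Finset.induction_on with
      | empty => simp
      | insert i S hi ih => rw [Finset.prod_insert hi, Finset.sum_insert hi, zpow_add₀ hx, ih]
    symm
    calc s k = ∏ i, ∏ j, a j ^ (z i j * (M.det.sign * M.adjugate k i)) := by
          refine Finset.prod_congr rfl fun i _ => ?_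
          rw [← he i, ← Finset.prod_zpow]
          exact Finset.prod_congr rfl fun j _ => (zpow_mul _ _ _).symm
      _ = ∏ j, a j ^ (if k = j then (M.det.natAbs : ℤ) else 0) := by
          rw [Finset.prod_comm]
          refine Finset.prod_congr rfl fun j _ => ?_
          rw [zs _ (ha0 j), hadj]
      _ = a k ^ M.det.natAbs := by
          rw [Finset.prod_eq_single k]
          · rw [if_pos rfl, zpow_natCast]
          · intro j _ hj
            rw [if_neg (Ne.symm hj), zpow_zero]
          · simp
  refine (Finset.card_le_card hsub).trans ?_
  rw [Fintype.card_piFinset]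
  refine (Finset.prod_le_pow_card _ _ (n.factorial * κ ^ n) fun k _ => ?_).trans (by simp)
  exact ((Multiset.toFinset_card_le _).trans (Polynomial.card_nthRoots _ _)).trans hb
end

section
/- Let d, N be natural numbers, let G = ℤ/Nℤ × ℤᵈ, and let X be a finite subset of G with 0 ∈ X such that X generates G as a group and |X+X| ≤ K|X| for some real K ≥ 1. Then d ≤ 16K. -/
open Pointwise

theorem aux_card {G V : Type*} [AddCommGroup G] [AddCommGroup V] [DecidableEq G]
    (π : G →+ V) (F T : Finset G) (v : V) (hF : ∀ x ∈ F, π x = v)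
    (hT : Set.InjOn π (T : Set G)) : (F + T).card = F.card * T.card := by
  rw [Finset.card_add_iff]
  rintro ⟨f, t⟩ h1 ⟨f', t'⟩ h2 h
  simp only [Set.mem_prod, Finset.mem_coe] at h1 h2 h
  have h3 := congrArg π h
  simp only [map_add, hF f h1.1, hF f' h2.1, add_right_inj] at h3
  have h4 := hT h1.2 h2.2 h3
  subst h4
  simpa using h

theorem aux_section {G V : Type*} [DecidableEq V] (π : G → V) (X : Finset G) (S : Finset V)
    (hS : S ⊆ X.image π) : ∃ T : Finset G, T ⊆ X ∧ T.image π = S ∧ Set.InjOn π (T : Set G) := by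
  classical
  have h : ∀ a : S, ∃ x ∈ X, π x = a := fun a => Finset.mem_image.1 (hS a.2)
  choose g hg1 hg2 using h
  refine ⟨S.attach.image g, ?_, ?_, ?_⟩
  · intro x hx
    obtain ⟨a, _, rfl⟩ := Finset.mem_image.1 hx
    exact hg1 a
  · ext a
    simp only [Finset.mem_image, Finset.mem_attach, true_and]
    constructor
    · rintro ⟨_, ⟨b, rfl⟩, rfl⟩
      rw [hg2]; exact b.2
    · intro ha
      exact ⟨_, ⟨⟨a, ha⟩, rfl⟩, hg2 _⟩
  · intro x hx y hy hxy
    obtain ⟨a, _, rfl⟩ := Finset.mem_image.1 (Finset.mem_coe.1 hx)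
    obtain ⟨b, _, rfl⟩ := Finset.mem_image.1 (Finset.mem_coe.1 hy)
    rw [hg2, hg2] at hxy
    rw [Subtype.ext hxy]

theorem aux_span {V L : Type*} [AddCommGroup V] [Module ℚ V] [DecidableEq V]
    [AddCommGroup L] [LinearOrder L] [IsOrderedAddMonoid L]
    (φ : V →+ L) (A' : Finset V) (v : V)
    (hv : ∀ a ∈ A', φ v < φ a) :
    Module.finrank ℚ (vectorSpan ℚ (insert v (A' : Set V))) ≤
      (A'.filter (fun a => v + a ∉ A' + A')).card := by
  set S := A'.filter (fun a => v + a ∉ A' + A') with hS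
  set W := Submodule.span ℚ ((S.image (fun a => a - v) : Finset V) : Set V) with hW
  have key : ∀ a ∈ A', a - v ∈ W := by
    by_contra hcon
    push Not at hcon
    obtain ⟨a0, ha0, hb0⟩ := hcon
    classical
    obtain ⟨a, ha, hmin⟩ := Finset.exists_min_image (A'.filter (fun a => a - v ∉ W)) φ
      ⟨a0, by simp [ha0, hb0]⟩
    rw [Finset.mem_filter] at ha
    have haS : a ∉ S := fun h => ha.2 (Submodule.subset_span (by
      simp only [Finset.coe_image]; exact ⟨a, h, rfl⟩))
    have h1 : v + a ∈ A' + A' := by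
      by_contra h; exact haS (by rw [hS, Finset.mem_filter]; exact ⟨ha.1, h⟩)
    obtain ⟨b, hb, c, hc, hbc⟩ := Finset.mem_add.1 h1
    have h2 : φ b + φ c = φ v + φ a := by rw [← map_add, hbc, map_add]
    have hbW : b - v ∈ W := by
      by_contra h
      have h5 := hmin b (Finset.mem_filter.2 ⟨hb, h⟩)
      have h6 := add_lt_add_of_le_of_lt h5 (hv c hc)
      rw [h2, add_comm] at h6
      exact lt_irrefl _ h6
    have hcW : c - v ∈ W := by
      by_contra h
      have h5 := hmin c (Finset.mem_filter.2 ⟨hc, h⟩)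
      have h6 := add_lt_add_of_lt_of_le (hv b hb) h5
      rw [h2] at h6
      exact lt_irrefl _ h6
    apply ha.2
    have h7 := W.add_mem hbW hcW
    have h8 : b - v + (c - v) = a - v := by
      have : b + c - v - v = v + a - v - v := by rw [hbc]
      calc b - v + (c - v) = b + c - v - v := by abel
        _ = _ := this
        _ = _ := by abel
    rwa [h8] at h7
  have hle : vectorSpan ℚ (insert v (A' : Set V)) ≤ W := by
    rw [vectorSpan_eq_span_vsub_set_right ℚ (Set.mem_insert v _), Submodule.span_le]
    rintro _ ⟨a, ha, rfl⟩
    rcases ha with rfl | ha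
    · simp
    · exact key a ha
  calc _ ≤ Module.finrank ℚ W := Submodule.finrank_mono hle
    _ ≤ (S.image (fun a => a - v)).card := finrank_span_finset_le_card _
    _ ≤ _ := Finset.card_image_le

theorem aux_main {G V L : Type*} [AddCommGroup G] [DecidableEq G]
    [AddCommGroup V] [Module ℚ V] [DecidableEq V] [FiniteDimensional ℚ V]
    [AddCommGroup L] [LinearOrder L] [IsOrderedAddMonoid L]
    (π : G →+ V) (φ : V →+ L) (hφ : Function.Injective φ) (n : ℕ) :
    ∀ X : Finset G, X.card = n → X.Nonempty →
    (Module.finrank ℚ (vectorSpan ℚ ((X.image π : Finset V) : Set V)) + 2) * X.card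
      ≤ 2 * (X + X).card := by
  induction n using Nat.strong_induction_on with
  | _ n ih =>
  intro X hXn hX
  obtain ⟨x0, hx0, hmin⟩ := Finset.exists_min_image X (fun x => φ (π x)) hX
  set v := π x0 with hv
  set F := X.filter (fun x => π x = v) with hF
  set X' := X.filter (fun x => ¬ π x = v) with hX'
  have hx0F : x0 ∈ F := by simp [hF, hx0, hv]
  have hFpos : 0 < F.card := Finset.card_pos.2 ⟨x0, hx0F⟩
  have hcard : F.card + X'.card = X.card := Finset.card_filter_add_card_filter_not _
  have hFX : F ⊆ X := Finset.filter_subset _ _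
  have hX'X : X' ⊆ X := Finset.filter_subset _ _
  have hFv : ∀ x ∈ F, π x = v := fun x hx => (Finset.mem_filter.1 hx).2
  set A' := X'.image π with hA'
  have hlt : ∀ a ∈ A', φ v < φ a := by
    intro a ha
    obtain ⟨x, hx, rfl⟩ := Finset.mem_image.1 ha
    have := Finset.mem_filter.1 hx
    exact lt_of_le_of_ne (hmin x this.1) (fun h => this.2 (hφ h).symm)
  have hA : X.image π = insert v A' := by
    ext a
    simp only [Finset.mem_image, Finset.mem_insert, hA', hX', Finset.mem_filter]
    constructor
    · rintro ⟨x, hx, rfl⟩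
      by_cases h : π x = v
      · exact Or.inl h
      · exact Or.inr ⟨x, ⟨hx, h⟩, rfl⟩
    · rintro (rfl | ⟨x, ⟨hx, _⟩, rfl⟩)
      · exact ⟨x0, hx0, rfl⟩
      · exact ⟨x, hx, rfl⟩
  have hAc : ((X.image π : Finset V) : Set V) = insert v (A' : Set V) := by
    rw [hA, Finset.coe_insert]
  have hvA' : v ∉ A' := fun h => lt_irrefl _ (hlt v h)
  have hD1 := aux_span φ A' v hlt
  rw [hAc]
  set D := Module.finrank ℚ (vectorSpan ℚ (insert v (A' : Set V))) with hD
  rcases X'.eq_empty_or_nonempty with he | hne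
  · have hA'e : A' = ∅ := by rw [hA', he, Finset.image_empty]
    have hD0 : D = 0 := by
      rw [hA'e] at hD1; simpa using hD1
    rw [hD0]
    have : X.card ≤ (X + X).card := Finset.card_le_card_add_left hX
    omega
  have IH := ih X'.card (by omega) X' rfl hne
  rw [← hA'] at IH
  set D' := Module.finrank ℚ (vectorSpan ℚ (A' : Set V)) with hD'
  have hDle : D ≤ D' + 1 := finrank_vectorSpan_insert_le_set ℚ _ _
  have hDge : D' ≤ D := Submodule.finrank_mono (vectorSpan_mono ℚ (Set.subset_insert _ _))
  have hXX' : X' + X' ⊆ X + X := Finset.add_subset_add hX'X hX'X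
  have hmap : ∀ z ∈ X' + X', π z ∈ A' + A' := by
    intro z hz
    obtain ⟨b, hb, c, hc, rfl⟩ := Finset.mem_add.1 hz
    rw [map_add]
    exact Finset.add_mem_add (Finset.mem_image_of_mem _ hb) (Finset.mem_image_of_mem _ hc)
  by_cases hDD : D' = D
  · set S := A'.filter (fun a => v + a ∉ A' + A') with hS
    obtain ⟨T, hTX, hTS, hTi⟩ := aux_section π X (insert v S) (by
      rw [hA]; exact Finset.insert_subset_insert _ (Finset.filter_subset _ _))
    have hTc : T.card = S.card + 1 := by
      rw [← Finset.card_image_of_injOn hTi, hTS, Finset.card_insert_of_notMem]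
      exact fun h => hvA' (Finset.mem_filter.1 h).1
    have hFT := aux_card π F T v hFv hTi
    have hdis : Disjoint (F + T) (X' + X') := by
      rw [Finset.disjoint_left]
      intro z hz hz'
      have h1 := hmap z hz'
      obtain ⟨f, hf, t, ht, rfl⟩ := Finset.mem_add.1 hz
      rw [map_add, hFv f hf] at h1
      have h2 : π t ∈ insert v S := hTS ▸ Finset.mem_image_of_mem _ ht
      rcases Finset.mem_insert.1 h2 with h2 | h2
      · rw [h2] at h1
        obtain ⟨b, hb, c, hc, hbc⟩ := Finset.mem_add.1 h1
        have h3 := add_lt_add (hlt b hb) (hlt c hc)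
        rw [← map_add φ b c, hbc, map_add φ v v] at h3
        exact lt_irrefl _ h3
      · exact (Finset.mem_filter.1 h2).2 h1
    have hle : (F + T).card + (X' + X').card ≤ (X + X).card := by
      rw [← Finset.card_union_of_disjoint hdis]
      exact Finset.card_le_card (Finset.union_subset (Finset.add_subset_add hFX hTX) hXX')
    rw [hFT, hTc] at hle
    rw [hDD] at IH
    rw [← hcard]
    have : F.card * (D + 1) ≤ F.card * (S.card + 1) := Nat.mul_le_mul_left _ (by omega)
    nlinarith
  · have hvspan : v ∉ affineSpan ℚ (A' : Set V) := by
      intro h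
      apply hDD
      rw [hD, hD', vectorSpan_insert_eq_vectorSpan h]
    obtain ⟨T, hTX, hTS, hTi⟩ := aux_section π X' A' (by rfl)
    have hTc : T.card = A'.card := by
      rw [← Finset.card_image_of_injOn hTi, hTS]
    have hA'card : D' + 1 ≤ A'.card := by
      have hpos : 0 < A'.card := Finset.card_pos.2 (hne.image _)
      have h := finrank_vectorSpan_image_finset_le ℚ (id : V → V) A' (n := A'.card - 1) (by omega)
      rw [Finset.image_id] at h
      change D' ≤ _ at h
      omega
    have hFT := aux_card π F T v hFv hTi
    have h1 : F.card * (D' + 1) ≤ (F + X').card := by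
      calc _ ≤ F.card * T.card := Nat.mul_le_mul_left _ (by omega)
        _ = _ := hFT.symm
        _ ≤ _ := Finset.card_le_card (Finset.add_subset_add_left hTX)
    have h2 : X'.card ≤ (F + X').card := Finset.card_le_card_add_left ⟨x0, hx0F⟩
    have h3 : F.card ≤ (F + F).card := Finset.card_le_card_add_left ⟨x0, hx0F⟩
    have hd1 : Disjoint (F + F) (F + X') := by
      rw [Finset.disjoint_left]
      intro z hz hz'
      obtain ⟨f, hf, g, hg, rfl⟩ := Finset.mem_add.1 hz
      obtain ⟨f', hf', x, hx, h⟩ := Finset.mem_add.1 hz'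
      have h := congrArg π h
      rw [map_add, map_add, hFv f hf, hFv f' hf', hFv g hg, add_right_inj] at h
      exact (Finset.mem_filter.1 hx).2 h
    have hd2 : Disjoint ((F + F) ∪ (F + X')) (X' + X') := by
      rw [Finset.disjoint_left]
      intro z hz hz'
      have h1 := hmap z hz'
      rw [← Finset.add_union] at hz
      obtain ⟨f, hf, g, hg, rfl⟩ := Finset.mem_add.1 hz
      rw [map_add, hFv f hf] at h1
      obtain ⟨b, hb, c, hc, hbc⟩ := Finset.mem_add.1 h1
      rcases Finset.mem_union.1 hg with hg | hg
      · rw [hFv g hg] at hbc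
        have h3 := add_lt_add (hlt b hb) (hlt c hc)
        rw [← map_add φ b c, hbc, map_add φ v v] at h3
        exact lt_irrefl _ h3
      · apply hvspan
        have hga : π g ∈ A' := Finset.mem_image_of_mem _ hg
        have h5 : v = (b - π g) + c := by
          rw [eq_sub_of_add_eq hbc.symm]; abel
        rw [h5]
        exact AffineSubspace.vadd_mem_of_mem_direction
          (AffineSubspace.vsub_mem_direction (mem_affineSpan ℚ hb) (mem_affineSpan ℚ hga))
          (mem_affineSpan ℚ hc)
    have hle : (F + F).card + (F + X').card + (X' + X').card ≤ (X + X).card := by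
      rw [← Finset.card_union_of_disjoint hd1, ← Finset.card_union_of_disjoint hd2]
      exact Finset.card_le_card (Finset.union_subset (Finset.union_subset
        (Finset.add_subset_add hFX hFX) (Finset.add_subset_add hFX hX'X)) hXX')
    have hDe : D = D' + 1 := by omega
    rw [hDe, ← hcard]
    nlinarith

theorem stmt7 (d N : ℕ) (hN : 0 < N) (X : Finset (ZMod N × (Fin d → ℤ)))
    (h0 : (0 : ZMod N × (Fin d → ℤ)) ∈ X)
    (hgen : AddSubgroup.closure (X : Set (ZMod N × (Fin d → ℤ))) = ⊤)
    (K : ℝ) (hK : 1 ≤ K)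
    (hXX : ((X + X).card : ℝ) ≤ K * (X.card : ℝ)) :
    (d : ℝ) ≤ 16 * K := by
  let π : ZMod N × (Fin d → ℤ) →+ (Fin d → ℚ) :=
    { toFun := fun x i => (x.2 i : ℚ)
      map_zero' := by ext; simp
      map_add' := by intros; ext; simp }
  let φ : (Fin d → ℚ) →+ Lex (Fin d → ℚ) :=
    { toFun := toLex
      map_zero' := rfl
      map_add' := fun _ _ => rfl }
  have hmain := aux_main π φ (fun _ _ h => h) _ X rfl ⟨0, h0⟩
  have htop : vectorSpan ℚ ((X.image π : Finset (Fin d → ℚ)) : Set (Fin d → ℚ)) = ⊤ := by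
    set W := vectorSpan ℚ ((X.image π : Finset (Fin d → ℚ)) : Set (Fin d → ℚ)) with hW
    have h1 : AddSubgroup.closure (X : Set (ZMod N × (Fin d → ℤ))) ≤
        W.toAddSubgroup.comap π := by
      rw [AddSubgroup.closure_le]
      intro x hx
      have := vsub_mem_vectorSpan ℚ (s := ((X.image π : Finset (Fin d → ℚ)) : Set (Fin d → ℚ)))
        (Finset.mem_coe.2 (Finset.mem_image_of_mem π hx))
        (Finset.mem_coe.2 (Finset.mem_image_of_mem π h0))
      rw [map_zero, vsub_eq_sub, sub_zero] at this
      exact this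
    rw [hgen] at h1
    rw [eq_top_iff, ← (Pi.basisFun ℚ (Fin d)).span_eq, Submodule.span_le]
    rintro _ ⟨i, rfl⟩
    have h2 : π (0, Pi.single i 1) ∈ W := h1 (AddSubgroup.mem_top (0, Pi.single i 1))
    have h3 : π (0, Pi.single i 1) = Pi.basisFun ℚ (Fin d) i := by
      ext j
      by_cases h : j = i
      · subst h; simp [π]
      · simp [π, h]
    rw [h3] at h2
    exact h2
  rw [htop, finrank_top, Module.finrank_fin_fun] at hmain
  have hpos : (0 : ℝ) < X.card := by exact_mod_cast Finset.card_pos.2 ⟨0, h0⟩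
  have h1 : ((d : ℝ) + 2) * X.card ≤ 2 * (X + X).card := by exact_mod_cast hmain
  have h2 : ((d : ℝ) + 2) * X.card ≤ (2 * K) * X.card := by nlinarith
  have h3 := le_of_mul_le_mul_right h2 hpos
  linarith
end

section
/- Let A ⊆ ℝ∖{0} be a finite set with |A| ≥ 2 satisfying |A·A| ≤ K|A| for some real K ≥ 1, and suppose that the multiplicative subgroup of ℝ∖{0} generated by A is a free abelian group of rank r (i.e., isomorphic to ℤʳ) for some natural number r ≥ 1. Then r ≤ 2K. -/
open Pointwise

theorem freiman_aux {V : Type*} [AddCommGroup V] [LinearOrder V] [IsOrderedAddMonoid V]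
    [Module ℚ V] (A : Finset V) :
    2 * Module.finrank ℚ (Submodule.span ℚ (A : Set V)) * A.card
      + Module.finrank ℚ (Submodule.span ℚ (A : Set V))
      ≤ 2 * (A + A).card + Module.finrank ℚ (Submodule.span ℚ (A : Set V)) ^ 2 := by
  classical
  induction A using Finset.induction_on_max with
  | empty => simpa using Nat.le_self_pow two_ne_zero _
  | insert v A hv ih =>
    have hvA : v ∉ A := fun h => lt_irrefl _ (hv v h)
    set s' := Module.finrank ℚ (Submodule.span ℚ (A : Set V)) with hs'
    set s := Module.finrank ℚ (Submodule.span ℚ ((insert v A : Finset V) : Set V)) with hs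
    rw [Finset.card_insert_of_notMem hvA]
    -- general counting
    have count : ∀ B : Finset V, B ⊆ A → (∀ b ∈ B, ∀ c ∈ A, ∀ d ∈ A, v + b ≠ c + d) →
        (A + A).card + (B.card + 1) ≤ (insert v A + insert v A).card := by
      intro B hB hBn
      have hvB : v ∉ B := fun h => hvA (hB h)
      have h1 : ((insert v B).image (fun b => v + b)).card = B.card + 1 := by
        rw [Finset.card_image_of_injective _ (add_right_injective v),
          Finset.card_insert_of_notMem hvB]
      rw [← h1, ← Finset.card_union_of_disjoint]
      · apply Finset.card_le_card
        apply Finset.union_subset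
        · exact Finset.add_subset_add (Finset.subset_insert _ _) (Finset.subset_insert _ _)
        · intro x hx
          obtain ⟨b, hb, rfl⟩ := Finset.mem_image.1 hx
          exact Finset.add_mem_add (Finset.mem_insert_self _ _)
            (Finset.insert_subset_insert _ hB hb)
      · rw [Finset.disjoint_left]
        intro x hx hx'
        obtain ⟨b, hb, rfl⟩ := Finset.mem_image.1 hx'
        obtain ⟨c, hc, d, hd, hcd⟩ := Finset.mem_add.1 hx
        rcases Finset.mem_insert.1 hb with rfl | hb
        · exact absurd hcd (add_lt_add (hv c hc) (hv d hd)).ne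
        · exact hBn b hb c hc d hd hcd.symm
    by_cases hmem : v ∈ Submodule.span ℚ (A : Set V)
    · have hss : s = s' := by
        rw [hs, hs', Finset.coe_insert, Submodule.span_insert_eq_span hmem]
      let B := A.filter (fun b => ∀ c ∈ A, ∀ d ∈ A, v + b ≠ c + d)
      have hc := count B (Finset.filter_subset _ _) (fun b hb => (Finset.mem_filter.1 hb).2)
      let C := insert v (B.image (fun b => b - v))
      have hCc : C.card ≤ B.card + 1 :=
        (Finset.card_insert_le _ _).trans (Nat.add_le_add_right Finset.card_image_le 1)
      have hvC : v ∈ Submodule.span ℚ (C : Set V) :=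
        Submodule.subset_span (by simp [C])
      have hx : ∀ n : ℕ, ∀ x ∈ A, (A.filter (fun y => x < y)).card = n →
          x - v ∈ Submodule.span ℚ (C : Set V) := by
        intro n
        induction n using Nat.strong_induction_on with
        | _ n IH =>
          intro x hx hn
          by_cases hxB : x ∈ B
          · apply Submodule.subset_span
            simp only [C, Finset.coe_insert, Finset.coe_image]
            exact Or.inr ⟨x, hxB, rfl⟩
          · have : ∃ c ∈ A, ∃ d ∈ A, v + x = c + d := by
              by_contra hcon
              push Not at hcon
              exact hxB (Finset.mem_filter.2 ⟨hx, hcon⟩)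
            obtain ⟨c, hc, d, hd, hcd⟩ := this
            have key : ∀ c ∈ A, x < c → c - v ∈ Submodule.span ℚ (C : Set V) := by
              intro c hc hxc
              refine IH _ ?_ c hc rfl
              rw [← hn]
              apply Finset.card_lt_card
              refine Finset.ssubset_iff_of_subset ?_ |>.2 ⟨c, ?_, ?_⟩
              · intro y hy
                rw [Finset.mem_filter] at hy ⊢
                exact ⟨hy.1, hxc.trans hy.2⟩
              · simp [hc, hxc]
              · simp
            have hxc : x < c := by
              by_contra hcon
              push Not at hcon
              have := add_lt_add_of_le_of_lt hcon (hv d hd)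
              rw [← hcd, add_comm] at this
              exact lt_irrefl _ this
            have hxd : x < d := by
              by_contra hcon
              push Not at hcon
              have := add_lt_add_of_lt_of_le (hv c hc) hcon
              rw [← hcd] at this
              exact lt_irrefl _ this
            have e : x - v = (c - v) + (d - v) := by
              have : x = c + d - v := by rw [← hcd]; abel
              rw [this]; abel
            rw [e]
            exact Submodule.add_mem _ (key c hc hxc) (key d hd hxd)
      have hle : s ≤ C.card := by
        refine le_trans ?_ (finrank_span_finset_le_card (R := ℚ) C)
        apply Submodule.finrank_mono
        rw [Submodule.span_le]
        intro x hxm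
        rcases Finset.mem_insert.1 (Finset.mem_coe.1 hxm) with rfl | hxA
        · exact hvC
        · have := Submodule.add_mem _ (hx _ x hxA rfl) hvC
          simpa using this
      rw [← hss] at ih
      nlinarith
    · have hss : s ≤ s' + 1 := by
        rw [hs, Finset.coe_insert, Submodule.span_insert]
        refine (Submodule.finrank_add_le_finrank_add_finrank _ _).trans ?_
        have := finrank_span_finset_le_card (R := ℚ) ({v} : Finset V)
        unfold Set.finrank at this
        rw [Finset.coe_singleton, Finset.card_singleton] at this
        omega
      have hss2 : s' + 1 ≤ s := by
        have : s' < s := by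
          apply Submodule.finrank_lt_finrank_of_lt
          refine lt_of_le_of_ne (Submodule.span_mono (by simp)) ?_
          intro h
          apply hmem
          rw [h]
          exact Submodule.subset_span (by simp)
        exact this
      have e : s = s' + 1 := le_antisymm hss hss2
      have hc := count A subset_rfl (by
        intro b hb c hc d hd h
        apply hmem
        have : v = c + d - b := by rw [← h]; abel
        rw [this]
        exact Submodule.sub_mem _ (Submodule.add_mem _ (Submodule.subset_span hc)
          (Submodule.subset_span hd)) (Submodule.subset_span hb))
      rw [e]
      nlinarith

theorem stmt9 (A : Finset ℝ) (h0 : (0 : ℝ) ∉ A) (h2 : 2 ≤ A.card)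
    (K : ℝ) (hK : 1 ≤ K) (hAA : ((A * A).card : ℝ) ≤ K * (A.card : ℝ))
    (r : ℕ) (hr : 1 ≤ r)
    (hfree : Nonempty
      ((Subgroup.closure {u : ℝˣ | (u : ℝ) ∈ A}) ≃* Multiplicative (Fin r → ℤ))) :
    (r : ℝ) ≤ 2 * K := by
  classical
  obtain ⟨e⟩ := hfree
  set S : Set ℝˣ := {u : ℝˣ | (u : ℝ) ∈ A} with hS
  set H := Subgroup.closure S with hH
  let g : H →* ℝ := (Units.coeHom ℝ).comp H.subtype
  have hg : Function.Injective g := by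
    intro x y h
    exact Subtype.ext (Units.ext h)
  let A₁ : Finset H := A.preimage g hg.injOn
  have hA₁ : A₁.image g = A := by
    rw [Finset.image_preimage]
    apply Finset.filter_true_of_mem
    intro x hx
    have hx0 : x ≠ 0 := fun h => h0 (h ▸ hx)
    exact ⟨⟨Units.mk0 x hx0, Subgroup.subset_closure (by simpa [hS] using hx)⟩, rfl⟩
  let f : H → Lex (Fin r → ℚ) := fun h => toLex (fun i => ((Multiplicative.toAdd (e h)) i : ℚ))
  have hfm : ∀ x y, f (x * y) = f x + f y := by
    intro x y
    apply ofLex.injective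
    funext i
    simp [f]
    rfl
  have hf1 : f 1 = 0 := by
    have := hfm 1 1
    simpa using this
  have hfinv : ∀ x, f x⁻¹ = - f x := by
    intro x
    have := hfm x⁻¹ x
    rw [inv_mul_cancel, hf1] at this
    exact eq_neg_of_add_eq_zero_left this.symm
  have hf : Function.Injective f := by
    intro x y h
    apply e.injective
    apply Multiplicative.toAdd.injective
    funext i
    have := congrFun (congrArg ofLex h) i
    simpa [f] using this
  let A₂ := A₁.image f
  have c2 : A₂.card = A.card := by
    rw [← hA₁, Finset.card_image_of_injective _ hg, Finset.card_image_of_injective _ hf]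
  have cc : (A₂ + A₂).card = (A * A).card := by
    have h1 : A * A = (A₁ * A₁).image g := by
      rw [Finset.image_mul, hA₁]
    have h2 : A₂ + A₂ = (A₁ * A₁).image f := by
      symm
      exact Finset.image_image₂_distrib hfm
    rw [h1, h2, Finset.card_image_of_injective _ hg, Finset.card_image_of_injective _ hf]
  have hspan : Submodule.span ℚ (A₂ : Set (Lex (Fin r → ℚ))) = ⊤ := by
    have hall : ∀ h : H, f h ∈ Submodule.span ℚ (A₂ : Set (Lex (Fin r → ℚ))) := by
      rintro ⟨x, hx⟩
      induction hx using Subgroup.closure_induction with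
      | mem x hx =>
        apply Submodule.subset_span
        apply Finset.mem_coe.2
        apply Finset.mem_image_of_mem
        rw [Finset.mem_preimage]
        exact hx
      | one => 
        have : f ⟨1, H.one_mem⟩ = 0 := hf1
        rw [this]; exact Submodule.zero_mem _
      | mul x y hx hy h1 h2 =>
        have := hfm ⟨x, hx⟩ ⟨y, hy⟩
        have h3 := Submodule.add_mem _ h1 h2
        rw [← this] at h3
        exact h3
      | inv x hx h1 =>
        have := hfinv ⟨x, hx⟩
        have h3 := Submodule.neg_mem _ h1
        rw [← this] at h3
        exact h3
    rw [eq_top_iff]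
    intro w _
    have hw : w = ∑ i, (ofLex w i) • f (e.symm (Multiplicative.ofAdd (Pi.single i 1))) := by
      apply ofLex.injective
      funext j
      have : ofLex (∑ i, (ofLex w i) • f (e.symm (Multiplicative.ofAdd (Pi.single i 1)))) 
        = ∑ i, (ofLex w i) • ofLex (f (e.symm (Multiplicative.ofAdd (Pi.single i 1)))) := rfl
      rw [this]
      simp [f, Finset.sum_apply, Pi.single_apply]
      have hu : ∀ u : Fin r → ℚ, u j = ∑ x, if j = x then u x else (0:ℚ) := by
        intro u
        simp
      exact hu (ofLex w)
    rw [hw]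
    exact Submodule.sum_mem _ fun i _ => Submodule.smul_mem _ _ (hall _)
  have hrank : Module.finrank ℚ (Lex (Fin r → ℚ)) = r := by
    have : Module.finrank ℚ (Fin r → ℚ) = r := by simp
    exact this
  have hle := finrank_span_finset_le_card (R := ℚ) A₂
  have key := freiman_aux A₂
  unfold Set.finrank at hle
  rw [hspan, finrank_top, hrank] at key hle
  rw [c2] at key hle
  have key : 2 * r * A.card + r ≤ 2 * (A * A).card + r ^ 2 := by
    rw [← cc]
    convert key
    rfl
  have key' : (2 * r * A.card + r : ℝ) ≤ 2 * (A * A).card + r ^ 2 := by exact_mod_cast key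
  have hle' : (r : ℝ) ≤ A.card := by exact_mod_cast hle
  have hr' : (1 : ℝ) ≤ r := by exact_mod_cast hr
  have hpos : (0 : ℝ) < A.card := by linarith
  have : (r : ℝ) * A.card ≤ 2 * K * A.card := by nlinarith
  exact le_of_mul_le_mul_right this hpos
end

section
/- Let n, d be natural numbers, let F ∈ ℂ[x₁,…,xₙ] be a non-constant polynomial with total degree d, and let A ⊆ ℂ be a finite non-empty set. Then |F(A,…,A)| ≥ |A|/d. -/
open MvPolynomial

open scoped Classical

theorem stmt10 (n d : ℕ) (F : MvPolynomial (Fin n) ℂ) (hd : F.totalDegree = d)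
    (hnonconst : ∀ c : ℂ, F ≠ C c) (A : Finset ℂ) (hA : A.Nonempty) :
    (A.card : ℝ) / (d : ℝ) ≤ ((polyImage F A).card : ℝ) := by
  by_contra hlt
  push Not at hlt
  have hd0 : 0 < (d : ℝ) := by
    rcases Nat.eq_zero_or_pos d with h | h
    · rw [h] at hlt
      simp at hlt
      exact absurd hlt (not_lt.mpr (Nat.cast_nonneg _))
    · exact_mod_cast h
  rw [lt_div_iff₀ hd0] at hlt
  have hlt' : (polyImage F A).card * d < A.card := by exact_mod_cast hlt
  have hP : (∏ v ∈ polyImage F A, (F - C v)) ≠ 0 :=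
    Finset.prod_ne_zero_iff.mpr fun v _ => sub_ne_zero.mpr (hnonconst v)
  have hdeg : (∏ v ∈ polyImage F A, (F - C v)).totalDegree ≤ (polyImage F A).card * d := by
    refine (totalDegree_finset_prod _ _).trans ?_
    rw [← smul_eq_mul]
    refine Finset.sum_le_card_nsmul _ _ _ fun v _ => ?_
    rw [← hd]
    exact totalDegree_sub_C_le F v
  apply hP
  refine eq_zero_of_eval_zero_at_prod_finset _ (fun _ => A) (fun i => ?_) (fun x hx => ?_)
  · exact ((degreeOf_le_totalDegree _ i).trans hdeg).trans_lt hlt'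
  · rw [eval_prod]
    refine Finset.prod_eq_zero (i := eval x F) ?_ (by simp)
    exact Finset.mem_image_of_mem _ (Fintype.mem_piFinset.mpr hx)
end

section
/- Let n be a natural number, let A ⊆ ℂ∖{0} be a finite non-empty set with |A·A| ≤ K|A| for some real K ≥ 1, and let r₁,…,rₙ ∈ ℤ. Then |{a₁^{r₁} ⋯ aₙ^{rₙ} : a₁,…,aₙ ∈ A}| ≤ K^{|r₁|+…+|rₙ|} · |A|. -/
open Pointwise

open scoped Classical

lemma aux_mem {G : Type*} [CommGroup G] [DecidableEq G] (B : Finset G) (n : ℕ) (r : Fin n → ℤ)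
    (s : Finset (Fin n)) (b : Fin n → G) (hb : ∀ i, b i ∈ B) :
    ∏ i ∈ s, b i ^ r i ∈ B ^ (∑ i ∈ s, (r i).toNat) / B ^ (∑ i ∈ s, (-r i).toNat) := by
  have h : ∏ i ∈ s, b i ^ r i = (∏ i ∈ s, b i ^ (r i).toNat) / (∏ i ∈ s, b i ^ (-r i).toNat) := by
    rw [← Finset.prod_div_distrib]
    refine Finset.prod_congr rfl fun i _ => ?_
    rw [← zpow_natCast, ← zpow_natCast, div_eq_mul_inv, ← zpow_sub, Int.toNat_sub_toNat_neg]
  have key : ∀ f : Fin n → ℕ, ∏ i ∈ s, b i ^ f i ∈ B ^ (∑ i ∈ s, f i) := by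
    clear h
    intro f
    induction s using Finset.induction_on with
    | empty => simp
    | insert i t hi ih =>
      rw [Finset.prod_insert hi, Finset.sum_insert hi, pow_add]
      exact Finset.mul_mem_mul (Finset.pow_mem_pow (hb i)) ih
  rw [h]
  exact Finset.div_mem_div (key _) (key _)

theorem stmt16 (n : ℕ) (A : Finset ℂ) (h0 : (0 : ℂ) ∉ A) (hA : A.Nonempty)
    (K : ℝ) (hK : 1 ≤ K) (hAA : ((A * A).card : ℝ) ≤ K * (A.card : ℝ))
    (r : Fin n → ℤ) :
    ((((Fintype.piFinset fun _ : Fin n => A).image fun a => ∏ i, a i ^ r i).card : ℝ))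
      ≤ K ^ (∑ i, (r i).natAbs) * (A.card : ℝ) := by
  have hinj : Function.Injective (Units.val : ℂˣ → ℂ) := Units.val_injective
  obtain ⟨B, rfl⟩ : ∃ B : Finset ℂˣ, A = B.image Units.val := by
    refine ⟨A.preimage Units.val hinj.injOn, ?_⟩
    ext x
    simp only [Finset.mem_image, Finset.mem_preimage]
    constructor
    · intro hx
      have : x ≠ 0 := fun h => h0 (h ▸ hx)
      exact ⟨Units.mk0 x this, hx, rfl⟩
    · rintro ⟨y, hy, rfl⟩; exact hy
  have hB : B.Nonempty := by simpa using hA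
  have hBB : B.image Units.val * B.image Units.val = (B * B).image (Units.val : ℂˣ → ℂ) :=
    (Finset.image_mul (Units.coeHom ℂ)).symm
  rw [hBB, Finset.card_image_of_injective _ hinj, Finset.card_image_of_injective _ hinj] at hAA
  rw [Finset.card_image_of_injective _ hinj]
  set P := ∑ i, (r i).toNat
  set M := ∑ i, (-r i).toNat
  have hPM : ∑ i, (r i).natAbs = P + M := by
    rw [← Finset.sum_add_distrib]
    exact Finset.sum_congr rfl fun i _ => by omega
  have hsub : ((Fintype.piFinset fun _ : Fin n => B.image Units.val).image
      fun a => ∏ i, a i ^ r i) ⊆ (B ^ P / B ^ M).image (Units.val : ℂˣ → ℂ) := by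
    intro x hx
    simp only [Finset.mem_image, Fintype.mem_piFinset] at hx
    obtain ⟨a, ha, rfl⟩ := hx
    choose b hb hba using ha
    refine Finset.mem_image.2 ⟨_, aux_mem B n r Finset.univ b hb, ?_⟩
    simp [hba]
  have h1 := (Finset.card_le_card hsub).trans Finset.card_image_le
  have h2 := Finset.pluennecke_ruzsa_inequality_pow_div_pow_mul hB B P M
  have h3 : (((B ^ P / B ^ M).card : ℚ≥0) : ℝ) ≤
      (((((B * B).card : ℚ≥0) / B.card) ^ (P + M) * B.card : ℚ≥0) : ℝ) := by exact_mod_cast h2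
  have hpos : (0 : ℝ) < B.card := by exact_mod_cast hB.card_pos
  have hle : ((B * B).card : ℝ) / B.card ≤ K := (div_le_iff₀ hpos).2 hAA
  push_cast at h3
  rw [hPM]
  calc _ ≤ ((B ^ P / B ^ M).card : ℝ) := by exact_mod_cast h1
    _ ≤ _ := h3
    _ ≤ _ := by gcongr
end

section
/- Let A ⊆ ℂ∖{0} be a finite set with 1 ∈ A satisfying |A·A| ≤ K|A| for some real K ≥ 1. Then the multiplicative subgroup of ℂ∖{0} generated by A has rank at most 16K, i.e., there exist g₁,…,g_s in this subgroup with s ≤ 16K such that every element x of the subgroup has some positive power x^k lying in the subgroup generated by g₁,…,g_s. -/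
open Pointwise

lemma aux_irr_span (B : Finset ℝ) (m : ℝ) (hm : m ∈ B) (hmin : ∀ v ∈ B, m ≤ v) (I : Finset ℝ)
    (hI : ∀ v ∈ B, v ∉ I → ∃ u ∈ B, ∃ w ∈ B, m < u ∧ m < w ∧ v + m = u + w) (hmI : m ∈ I) :
    Module.finrank ℚ (vectorSpan ℚ (B : Set ℝ)) + 1 ≤ I.card := by
  classical
  set T : Finset ℝ := (I.erase m).image (fun v => v - m) with hT
  have key : ∀ v ∈ B, v - m ∈ Submodule.span ℚ (T : Set ℝ) := by
    by_contra! hcon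
    obtain ⟨v0, hv0, hv0'⟩ := hcon
    set Bad := B.filter (fun v => v - m ∉ Submodule.span ℚ (T : Set ℝ)) with hBad
    have hne : Bad.Nonempty := ⟨v0, by simp [hBad, hv0, hv0']⟩
    obtain ⟨v, hv, hvmin⟩ := Bad.exists_min_image id hne
    simp only [hBad, Finset.mem_filter, id] at hv hvmin
    have good : ∀ u ∈ B, u < v → u - m ∈ Submodule.span ℚ (T : Set ℝ) := by
      intro u hu huv
      by_contra hc
      exact absurd (hvmin u ⟨hu, hc⟩) (not_le.mpr huv)
    by_cases hvI : v ∈ I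
    · apply hv.2
      by_cases hvm : v = m
      · simp [hvm]
      · apply Submodule.subset_span
        simp only [hT, Finset.coe_image, Set.mem_image]
        exact ⟨v, by simp [hvm, hvI], rfl⟩
    · obtain ⟨u, hu, w, hw, hmu, hmw, h⟩ := hI v hv.1 hvI
      apply hv.2
      have : v - m = (u - m) + (w - m) := by linarith
      rw [this]
      exact Submodule.add_mem _ (good u hu (by linarith)) (good w hw (by linarith))
  have h1 : vectorSpan ℚ (B : Set ℝ) ≤ Submodule.span ℚ (T : Set ℝ) := by
    rw [vectorSpan_eq_span_vsub_set_right ℚ (p := m) (by exact_mod_cast hm)]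
    rw [Submodule.span_le]
    rintro _ ⟨v, hv, rfl⟩
    exact key v (by exact_mod_cast hv)
  have h2 := Submodule.finrank_mono h1
  have h3 : Module.finrank ℚ (Submodule.span ℚ (T : Set ℝ)) ≤ T.card := finrank_span_finset_le_card T
  have h4 : T.card ≤ (I.erase m).card := Finset.card_image_le
  rw [Finset.card_erase_of_mem hmI] at h4
  have h5 : 0 < I.card := Finset.card_pos.mpr ⟨m, hmI⟩
  omega

lemma aux_main_s17 {G : Type*} [CommGroup G] [DecidableEq G] (p : G → ℝ)
    (hp : ∀ a b, p (a * b) = p a + p b) :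
    ∀ n : ℕ, ∀ A : Finset G, A.card = n → A.Nonempty →
      (Module.finrank ℚ (vectorSpan ℚ (A.image p : Set ℝ)) + 2) * A.card ≤ 2 * (A * A).card := by
  classical
  intro n
  induction n using Nat.strong_induction_on with
  | _ n ih =>
  intro A hn hA
  obtain ⟨x, hx, hxmin⟩ := A.exists_min_image p hA
  set m := p x with hm
  set F := A.filter (fun a => p a = m) with hF
  set A' := A.filter (fun a => ¬ p a = m) with hA'
  have hcard : F.card + A'.card = A.card := Finset.card_filter_add_card_filter_not _
  have hxF : x ∈ F := by simp [hF, hx, hm]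
  have hFpos : 0 < F.card := Finset.card_pos.mpr ⟨x, hxF⟩
  have hFm : ∀ a ∈ F, p a = m := fun a ha => (Finset.mem_filter.mp ha).2
  have hFA : F ⊆ A := Finset.filter_subset _ _
  have hA'A : A' ⊆ A := Finset.filter_subset _ _
  have hA'lt : ∀ a ∈ A', m < p a := fun a ha =>
    lt_of_le_of_ne (hxmin a (hA'A ha)) (Ne.symm (Finset.mem_filter.mp ha).2)
  have hFAcard : A.card ≤ (F * A).card := Finset.card_le_card_mul_left ⟨x, hxF⟩
  rcases A'.eq_empty_or_nonempty with hE | hNE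
  · have himg : A.image p = {m} := by
      apply Finset.eq_singleton_iff_unique_mem.mpr
      refine ⟨Finset.mem_image.mpr ⟨x, hx, rfl⟩, ?_⟩
      intro v hv
      obtain ⟨a, ha, rfl⟩ := Finset.mem_image.mp hv
      by_contra hc
      have : a ∈ A' := by simp [hA', ha, hc]
      simp [hE] at this
    have : (F * A).card ≤ (A * A).card := Finset.card_le_card (Finset.mul_subset_mul_right hFA)
    rw [himg]
    rw [Finset.coe_singleton, vectorSpan_singleton, finrank_bot]
    omega
  set d := Module.finrank ℚ (vectorSpan ℚ (A.image p : Set ℝ)) with hd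
  set d' := Module.finrank ℚ (vectorSpan ℚ (A'.image p : Set ℝ)) with hd'
  have hIH : (d' + 2) * A'.card ≤ 2 * (A' * A').card := ih A'.card (by omega) A' rfl hNE
  set S := (F * A) \ (A' * A') with hS
  have hSc : (A' * A').card + S.card ≤ (A * A).card := by
    rw [← Finset.card_union_of_disjoint Finset.disjoint_sdiff]
    apply Finset.card_le_card
    apply Finset.union_subset (Finset.mul_subset_mul hA'A hA'A)
    exact Finset.sdiff_subset.trans (Finset.mul_subset_mul_right hFA)
  -- fact 1
  have fact1 : (d + 1) * F.card ≤ S.card := by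
    set I := (A.image p).filter (fun v => ¬ ∃ u ∈ A', ∃ w ∈ A', v + m = p u + p w) with hI
    have hIc : d + 1 ≤ I.card := by
      apply aux_irr_span (A.image p) m (Finset.mem_image.mpr ⟨x, hx, rfl⟩)
      · intro v hv
        obtain ⟨a, ha, rfl⟩ := Finset.mem_image.mp hv
        exact hxmin a ha
      · intro v hv hvI
        have : ∃ u ∈ A', ∃ w ∈ A', v + m = p u + p w := by
          by_contra hc
          exact hvI (Finset.mem_filter.mpr ⟨hv, hc⟩)
        obtain ⟨u, hu, w, hw, h⟩ := this
        exact ⟨p u, Finset.mem_image_of_mem p (hA'A hu), p w, Finset.mem_image_of_mem p (hA'A hw),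
          hA'lt u hu, hA'lt w hw, h⟩
      · refine Finset.mem_filter.mpr ⟨Finset.mem_image.mpr ⟨x, hx, rfl⟩, ?_⟩
        rintro ⟨u, hu, w, hw, h⟩
        have := hA'lt u hu
        have := hA'lt w hw
        linarith
    have hch : ∀ v : ℝ, ∃ a : G, v ∈ I → a ∈ A ∧ p a = v := by
      intro v
      by_cases hv : v ∈ I
      · obtain ⟨a, ha, h⟩ := Finset.mem_image.mp (Finset.mem_filter.mp hv).1
        exact ⟨a, fun _ => ⟨ha, h⟩⟩
      · exact ⟨1, fun h => absurd h hv⟩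
    choose r hr using hch
    have hinj : Set.InjOn (fun q : ℝ × G => q.2 * r q.1) (I ×ˢ F : Finset (ℝ × G)) := by
      rintro ⟨v, a⟩ h1 ⟨w, b⟩ h2 h
      simp only [Finset.coe_product, Set.mem_prod, Finset.mem_coe] at h1 h2
      simp only at h
      have e := congrArg p h
      rw [hp, hp, hFm a h1.2, hFm b h2.2, (hr v h1.1).2, (hr w h2.1).2] at e
      have e' : v = w := by linarith
      subst e'
      have := mul_right_cancel h
      rw [this]
    calc (d + 1) * F.card ≤ I.card * F.card := Nat.mul_le_mul_right _ hIc
      _ = (I ×ˢ F).card := (Finset.card_product _ _).symm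
      _ = ((I ×ˢ F).image (fun q : ℝ × G => q.2 * r q.1)).card :=
          (Finset.card_image_of_injOn hinj).symm
      _ ≤ S.card := by
          apply Finset.card_le_card
          intro y hy
          obtain ⟨⟨v, a⟩, hq, rfl⟩ := Finset.mem_image.mp hy
          obtain ⟨hv, ha⟩ := Finset.mem_product.mp hq
          simp only at hv ha
          refine Finset.mem_sdiff.mpr ⟨Finset.mul_mem_mul ha (hr v hv).1, ?_⟩
          intro hc
          obtain ⟨u, hu, w, hw, h⟩ := Finset.mem_mul.mp hc
          have e := congrArg p h
          simp only [hp] at e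
          rw [hFm a ha, (hr v hv).2] at e
          exact (Finset.mem_filter.mp hv).2 ⟨u, hu, w, hw, by linarith⟩
  have himg : (A.image p : Set ℝ) = insert m (A'.image p : Set ℝ) := by
    ext v
    simp only [Finset.coe_image, Set.mem_image, Finset.mem_coe, Set.mem_insert_iff]
    constructor
    · rintro ⟨a, ha, rfl⟩
      by_cases h : p a = m
      · exact Or.inl h
      · exact Or.inr ⟨a, by simp [hA', ha, h], rfl⟩
    · rintro (rfl | ⟨a, ha, rfl⟩)
      · exact ⟨x, hx, rfl⟩
      · exact ⟨a, hA'A ha, rfl⟩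
  by_cases hmem : m ∈ affineSpan ℚ (A'.image p : Set ℝ)
  · have hdd : d = d' := by rw [hd, hd', himg, vectorSpan_insert_eq_vectorSpan hmem]
    rw [← hdd] at hIH
    nlinarith
  · have hdd : d ≤ d' + 1 := by
      rw [hd, hd', himg]
      exact finrank_vectorSpan_insert_le_set ℚ _ m
    have fact2 : A.card ≤ S.card := by
      refine hFAcard.trans (Finset.card_le_card ?_)
      intro y hy
      refine Finset.mem_sdiff.mpr ⟨hy, ?_⟩
      intro hc
      obtain ⟨a, ha, b, hb, rfl⟩ := Finset.mem_mul.mp hy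
      obtain ⟨u, hu, w, hw, h⟩ := Finset.mem_mul.mp hc
      have e := congrArg p h
      simp only [hp] at e
      rw [hFm a ha] at e
      by_cases hbm : p b = m
      · have := hA'lt u hu
        have := hA'lt w hw
        linarith
      · have hbA' : b ∈ A' := by simp [hA', hb, hbm]
        apply hmem
        have hs : ∀ a ∈ A', p a ∈ affineSpan ℚ (A'.image p : Set ℝ) := fun a ha =>
          subset_affineSpan ℚ _ (by exact_mod_cast Finset.mem_image_of_mem p ha)
        have := AffineSubspace.smul_vsub_vadd_mem (affineSpan ℚ (A'.image p : Set ℝ)) (1 : ℚ)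
          (hs u hu) (hs b hbA') (hs w hw)
        have e2 : m = (1 : ℚ) • (p u -ᵥ p b) +ᵥ p w := by
          simp only [one_smul, vsub_eq_sub, vadd_eq_add]
          linarith
        rw [e2]
        exact this
    nlinarith

lemma aux_gen {ι : Type*} (g : ι → ℂˣ) (w : TensorProduct ℤ ℚ (Additive ℂˣ))
    (hw : w ∈ Submodule.span ℚ (Set.range fun i =>
      TensorProduct.mk ℤ ℚ (Additive ℂˣ) 1 (Additive.ofMul (g i)))) :
    ∃ k : ℕ, 0 < k ∧ ∃ y ∈ Subgroup.closure (Set.range g),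
      k • w = TensorProduct.mk ℤ ℚ (Additive ℂˣ) 1 (Additive.ofMul y) := by
  induction hw using Submodule.span_induction with
  | mem x h =>
    obtain ⟨i, rfl⟩ := h
    exact ⟨1, one_pos, g i, Subgroup.subset_closure ⟨i, rfl⟩, by simp⟩
  | zero => exact ⟨1, one_pos, 1, one_mem _, by simp⟩
  | add x y _ _ hx hy =>
    obtain ⟨k, hk, a, ha, e⟩ := hx
    obtain ⟨l, hl, b, hb, e'⟩ := hy
    refine ⟨k * l, by positivity, a ^ l * b ^ k, mul_mem (pow_mem ha _) (pow_mem hb _), ?_⟩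
    rw [ofMul_mul, ofMul_pow, ofMul_pow, map_add, map_nsmul, map_nsmul, ← e, ← e', smul_add,
      smul_smul, smul_smul, mul_comm l k]
  | smul c x _ hx =>
    obtain ⟨k, hk, a, ha, e⟩ := hx
    refine ⟨c.den * k, by have := c.den_pos; positivity, a ^ c.num, zpow_mem ha _, ?_⟩
    rw [ofMul_zpow, map_zsmul, ← e, ← Nat.cast_smul_eq_nsmul ℚ, ← Int.cast_smul_eq_zsmul ℚ,
      ← Nat.cast_smul_eq_nsmul ℚ, smul_smul, smul_smul]
    congr 1
    push_cast
    have := Rat.den_mul_eq_num c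
    linear_combination (k : ℚ) * this

lemma aux_tors (z : ℂˣ) (hz : TensorProduct.mk ℤ ℚ (Additive ℂˣ) 1 (Additive.ofMul z) = 0) :
    ∃ k : ℕ, 0 < k ∧ z ^ k = 1 := by
  have : IsLocalizedModule (nonZeroDivisors ℤ) (TensorProduct.mk ℤ ℚ (Additive ℂˣ) 1) :=
    (isLocalizedModule_iff_isBaseChange (nonZeroDivisors ℤ) ℚ _).mpr
      (TensorProduct.isBaseChange ℤ (Additive ℂˣ) ℚ)
  obtain ⟨s, hs⟩ := (IsLocalizedModule.eq_zero_iff (nonZeroDivisors ℤ) _).mp hz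
  have hs0 : (s : ℤ) ≠ 0 := nonZeroDivisors.ne_zero s.2
  have hs' : z ^ (s : ℤ) = 1 := by
    have : (s : ℤ) • Additive.ofMul z = 0 := hs
    rw [← ofMul_zpow] at this
    exact this
  refine ⟨(s : ℤ).natAbs, Int.natAbs_pos.mpr hs0, ?_⟩
  exact pow_natAbs_eq_one.mpr hs'

theorem stmt17 (A : Finset ℂ) (h0 : (0 : ℂ) ∉ A) (h1 : (1 : ℂ) ∈ A)
    (K : ℝ) (hK : 1 ≤ K) (hAA : ((A * A).card : ℝ) ≤ K * (A.card : ℝ)) :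
    ∃ s : ℕ, (s : ℝ) ≤ 16 * K ∧
      ∃ g : Fin s → ℂˣ,
        (∀ i, g i ∈ Subgroup.closure {u : ℂˣ | (u : ℂ) ∈ A}) ∧
        ∀ x ∈ Subgroup.closure {u : ℂˣ | (u : ℂ) ∈ A},
          ∃ k : ℕ, 0 < k ∧ x ^ k ∈ Subgroup.closure (Set.range g) := by
  classical
  set f : Additive ℂˣ →ₗ[ℤ] TensorProduct ℤ ℚ (Additive ℂˣ) :=
    TensorProduct.mk ℤ ℚ (Additive ℂˣ) 1 with hf
  set U : Finset ℂˣ := A.preimage (fun u : ℂˣ => (u : ℂ)) (Units.val_injective.injOn) with hU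
  have hUA : U.image (fun u : ℂˣ => (u : ℂ)) = A := by
    ext a
    simp only [hU, Finset.mem_image, Finset.mem_preimage]
    constructor
    · rintro ⟨u, hu, rfl⟩; exact hu
    · intro ha
      have ha0 : a ≠ 0 := fun h => h0 (h ▸ ha)
      exact ⟨Units.mk0 a ha0, by simpa using ha, by simp⟩
  have hUc : U.card = A.card := by
    rw [← hUA, Finset.card_image_of_injective _ Units.val_injective]
  have hUUc : (U * U).card = (A * A).card := by
    rw [← hUA, ← Finset.card_image_of_injective (U * U) Units.val_injective]
    congr 1
    exact Finset.image_mul (Units.coeHom ℂ)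
  have h1U : (1 : ℂˣ) ∈ U := by simp [hU, h1]
  set φ : ℂˣ → TensorProduct ℤ ℚ (Additive ℂˣ) := fun u => f (Additive.ofMul u) with hφ
  have hφm : ∀ a b, φ (a * b) = φ a + φ b := fun a b => by simp [hφ]
  set W := Submodule.span ℚ (φ '' U) with hW
  haveI : FiniteDimensional ℚ W :=
    FiniteDimensional.span_of_finite ℚ (U.finite_toSet.image φ)
  obtain ⟨j, hj⟩ : ∃ j : W →ₗ[ℚ] ℝ, Function.Injective j := by
    rw [← lift_rank_le_iff_exists_linearMap, Real.rank_rat_real]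
    simp only [Cardinal.lift_id, Cardinal.lift_continuum]
    exact (Module.rank_lt_aleph0 ℚ W).le.trans Cardinal.aleph0_le_continuum
  obtain ⟨q, hq⟩ := LinearMap.exists_extend j
  have hmain := aux_main_s17 (fun u => q (φ u)) (fun a b => by simp only [hφm, map_add]) U.card U rfl
    ⟨1, h1U⟩
  have hfin : Module.finrank ℚ (vectorSpan ℚ ((U.image (fun u => q (φ u)) : Finset ℝ) : Set ℝ))
      = Module.finrank ℚ W := by
    have e : vectorSpan ℚ ((U.image (fun u => q (φ u)) : Finset ℝ) : Set ℝ) = W.map q := by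
      rw [vectorSpan_eq_span_vsub_set_right ℚ (p := (0 : ℝ))
        (by
          rw [Finset.coe_image]
          exact ⟨1, by exact_mod_cast h1U, by simp [hφ]⟩)]
      rw [hW, Submodule.map_span, Set.image_image]
      simp
    have e2 : W.map q = LinearMap.range j := by
      rw [← hq, LinearMap.range_comp, Submodule.range_subtype]
    rw [e, e2, LinearMap.finrank_range_of_inj hj]
  rw [hfin] at hmain
  obtain ⟨b, hbU, hbs, -⟩ := Submodule.exists_fun_fin_finrank_span_eq ℚ (φ '' U)
  choose g hgU hgb using hbU
  refine ⟨Module.finrank ℚ W, ?_, g, ?_, ?_⟩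
  · rw [hUc, hUUc] at hmain
    have hA : (0 : ℝ) < A.card := by exact_mod_cast Finset.card_pos.mpr ⟨1, h1⟩
    have hm' : ((Module.finrank ℚ W : ℝ) + 2) * A.card ≤ 2 * (A * A).card := by
      exact_mod_cast hmain
    have : ((Module.finrank ℚ W : ℝ) + 2) * A.card ≤ (2 * K) * A.card := by linarith
    have := le_of_mul_le_mul_right this hA
    linarith
  · intro i
    apply Subgroup.subset_closure
    have := hgU i
    simpa [hU] using this
  · intro x hx
    have hxW : φ x ∈ W := by
      induction hx using Subgroup.closure_induction with
      | mem x h => exact Submodule.subset_span ⟨x, by simpa [hU] using h, rfl⟩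
      | one => simp [hφ]
      | mul x y _ _ hx hy => rw [hφm]; exact add_mem hx hy
      | inv x _ hx =>
        have : φ x⁻¹ = - φ x := by simp [hφ]
        rw [this]; exact neg_mem hx
    have hxs : φ x ∈ Submodule.span ℚ (Set.range fun i => f (Additive.ofMul (g i))) := by
      have : (fun i => f (Additive.ofMul (g i))) = b := funext hgb
      rw [this, hbs]; exact hxW
    obtain ⟨k, hk, y, hy, e⟩ := aux_gen g _ hxs
    obtain ⟨l, hl, e'⟩ := aux_tors (x ^ k / y) (by
      rw [ofMul_div, ofMul_pow, map_sub, map_nsmul, ← e]; exact sub_self _)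
    refine ⟨k * l, by positivity, ?_⟩
    rw [div_pow, div_eq_one, ← pow_mul] at e'
    rw [e']
    exact pow_mem hy _
end
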